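/- Let A be an srl-monoid satisfying E2 (z→(x∨y) = (z→x) ∨ (z→y) for all x,y,z ∈ A). Then for all a, b ∈ A⁻: C[a ∨ b] = C[a] ∩ C[b], i.e., the smallest strongly convex subalgebra of A containing a ∨ b is equal to the intersection of the smallest strongly convex subalgebra containing a and the smallest strongly convex subalgebra containing b. -/

import Mathlib

/-!
Write `□x = 1 → x`. The axioms say that `x → y` is the largest `q` with `□q = q` and `x * q ≤ y`,
and that the fixed points of `□` are closed under products (`IsSRL.le_arr_iff`,
`IsSRL.box_pow`). For `q = □q ≤ 1` this makes

  `powerHull q = {x | ∃ n, q ^ n ≤ x ∧ x * q ^ n ≤ 1}`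

a strongly convex subalgebra (`IsSRL.powerHull_strong`), and for `a ≤ 1` the set `powerHull (□a)`
contains `a`, hence `C[a] ⊆ powerHull (□a)`.

If `x` lies in `C[a] ∩ C[b]`, there is therefore an `n` witnessing membership of `x` in both
`powerHull (□a)` and `powerHull (□b)`. E2 gives `□(a ⊔ b) = □a ⊔ □b`, and in the negative cone
`(p ⊔ q) ^ (n + n) ≤ p ^ n ⊔ q ^ n` (`sup_pow_le`). So `h = □(a ⊔ b) ^ (n + n)`, which belongs to
`C[a ⊔ b]`, satisfies `h ≤ x` and `x * h ≤ 1`, and strong convexity puts `x` in `C[a ⊔ b]`.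
The other inclusion is convexity applied to `a, b ≤ a ⊔ b ≤ 1`.
-/

variable {A : Type*} [Lattice A] [CommMonoid A]

/-- An srl-monoid structure on a lattice-ordered commutative monoid, with arrow `arr`
and monoid unit `e = 1`. -/
structure IsSRL (arr : A → A → A) : Prop where
  mul_sup : ∀ a b c : A, (a ⊔ b) * c = (a * c) ⊔ (b * c)
  ax1 : ∀ x y : A, (1 : A) ≤ arr (x ⊓ y) y
  ax2 : ∀ x y z : A, arr x y ≤ arr (z ⊓ 1) (arr x y)
  ax3 : ∀ x y : A, x * arr x y ≤ y
  ax4 : ∀ x y z : A, arr z (x ⊓ y) = arr z x ⊓ arr z y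
  ax5 : ∀ x y : A, arr 1 (arr 1 x * arr 1 y) = arr 1 x * arr 1 y
  ax6 : ∀ x y : A, arr 1 y ≤ arr x (x * arr 1 y)

/-- A congruence of an srl-monoid: an equivalence relation compatible with ⊓, ⊔, · and →. -/
def IsCongruence (arr : A → A → A) (θ : A → A → Prop) : Prop :=
  Equivalence θ ∧
  (∀ a b c d : A, θ a b → θ c d → θ (a ⊓ c) (b ⊓ d)) ∧
  (∀ a b c d : A, θ a b → θ c d → θ (a ⊔ c) (b ⊔ d)) ∧
  (∀ a b c d : A, θ a b → θ c d → θ (a * c) (b * d)) ∧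
  (∀ a b c d : A, θ a b → θ c d → θ (arr a c) (arr b d))

/-- A convex subalgebra of an srl-monoid. -/
structure IsConvexSubalgebra (arr : A → A → A) (H : Set A) : Prop where
  one_mem : (1 : A) ∈ H
  inf_mem : ∀ a b : A, a ∈ H → b ∈ H → a ⊓ b ∈ H
  sup_mem : ∀ a b : A, a ∈ H → b ∈ H → a ⊔ b ∈ H
  mul_mem : ∀ a b : A, a ∈ H → b ∈ H → a * b ∈ H
  arr_mem : ∀ a b : A, a ∈ H → b ∈ H → arr a b ∈ H
  convex : ∀ a b c : A, a ∈ H → b ∈ H → a ≤ c → c ≤ b → c ∈ H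

/-- A strongly convex subalgebra of an srl-monoid. -/
structure IsStronglyConvexSubalgebra (arr : A → A → A) (H : Set A) : Prop where
  toConvex : IsConvexSubalgebra arr H
  strong : ∀ a h : A, h ∈ H → a * h ≤ 1 → 1 ≤ arr h a → a ∈ H

/-- `s(a,b) = (a→b) ⊓ (b→a) ⊓ e`. -/
def srlS (arr : A → A → A) (a b : A) : A := arr a b ⊓ arr b a ⊓ 1

/-- `θ_H = {(a,b) : a·h ≤ b and b·h ≤ a for some h ∈ H}`. -/
def thetaH (H : Set A) (a b : A) : Prop := ∃ h ∈ H, a * h ≤ b ∧ b * h ≤ a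

/-- Iterates of `□(a) = e → a`: `□⁰(a) = a`, `□¹(a) = □(a)`,
`□^{n+1}(a) = □(a) · □ⁿ(a)` for `n ≥ 1`. -/
def boxIter (arr : A → A → A) : ℕ → A → A
  | 0, a => a
  | 1, a => arr 1 a
  | n + 2, a => arr 1 a * boxIter arr (n + 1) a

namespace IsSRL

variable {arr : A → A → A}

theorem isOrderedMonoid (hA : IsSRL arr) : IsOrderedMonoid A where
  mul_le_mul_left a b h c := by
    have := hA.mul_sup a b c
    rw [sup_eq_right.mpr h] at this
    rw [this]
    exact le_sup_left

theorem one_le_arr (hA : IsSRL arr) {x y : A} (h : x ≤ y) : 1 ≤ arr x y := by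
  simpa [inf_eq_left.mpr h] using hA.ax1 x y

theorem arr_mono (hA : IsSRL arr) (z : A) {x y : A} (h : x ≤ y) : arr z x ≤ arr z y := by
  have := hA.ax4 x y z
  rw [inf_eq_left.mpr h] at this
  rw [this]
  exact inf_le_right

theorem box_le (hA : IsSRL arr) (x : A) : arr 1 x ≤ x := by
  simpa using hA.ax3 1 x

theorem box_one (hA : IsSRL arr) : arr 1 1 = 1 :=
  le_antisymm (hA.box_le 1) (hA.one_le_arr le_rfl)

theorem box_arr (hA : IsSRL arr) (x y : A) : arr 1 (arr x y) = arr x y :=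
  le_antisymm (hA.box_le _) (by simpa using hA.ax2 x y 1)

theorem box_pow (hA : IsSRL arr) {q : A} (hq : arr 1 q = q) (n : ℕ) :
    arr 1 (q ^ n) = q ^ n := by
  induction n with
  | zero => simpa using hA.box_one
  | succ n ih =>
    have := hA.ax5 (q ^ n) q
    rw [ih, hq] at this
    rwa [pow_succ]

/-- Residuation, restricted to fixed points of `□`. -/
theorem le_arr_iff (hA : IsSRL arr) {q : A} (hq : arr 1 q = q) (x y : A) :
    q ≤ arr x y ↔ x * q ≤ y := by
  have := hA.isOrderedMonoid
  constructor
  · intro h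
    exact (mul_le_mul_right h x).trans (hA.ax3 x y)
  · intro h
    have h6 := hA.ax6 x q
    rw [hq] at h6
    exact h6.trans (hA.arr_mono x h)

end IsSRL

/-- The elements `x` with `q ^ n ≤ x` and `x * q ^ n ≤ 1` for some `n`.
For `a ≤ 1` this set, with `q = □a`, contains `C[a]`. -/
def powerHull (q : A) : Set A := {x | ∃ n : ℕ, q ^ n ≤ x ∧ x * q ^ n ≤ 1}

/-- In the negative cone the exponent witnessing membership in `powerHull q` can be increased. -/
theorem powerHull_witness_mono [IsOrderedMonoid A] {q x : A} (hq : q ≤ 1) {n m : ℕ} (hnm : n ≤ m)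
    (h : q ^ n ≤ x ∧ x * q ^ n ≤ 1) : q ^ m ≤ x ∧ x * q ^ m ≤ 1 := by
  have hp : q ^ m ≤ q ^ n := pow_le_pow_right_of_le_one' hq hnm
  exact ⟨hp.trans h.1, (mul_le_mul_right hp x).trans h.2⟩

theorem exists_common_witness [IsOrderedMonoid A] {p q x y : A} (hp : p ≤ 1) (hq : q ≤ 1)
    (hx : x ∈ powerHull p) (hy : y ∈ powerHull q) :
    ∃ n : ℕ, (p ^ n ≤ x ∧ x * p ^ n ≤ 1) ∧ (q ^ n ≤ y ∧ y * q ^ n ≤ 1) := by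
  obtain ⟨n, hn⟩ := hx
  obtain ⟨m, hm⟩ := hy
  exact ⟨max n m, powerHull_witness_mono hp (le_max_left n m) hn,
    powerHull_witness_mono hq (le_max_right n m) hm⟩

theorem IsSRL.powerHull_convex {arr : A → A → A} (hA : IsSRL arr) {q : A} (hq : arr 1 q = q)
    (hq1 : q ≤ 1) : IsConvexSubalgebra arr (powerHull q) := by
  have := hA.isOrderedMonoid
  refine ⟨⟨0, by simp⟩, ?_, ?_, ?_, ?_, ?_⟩
  · intro x y hx hy
    obtain ⟨n, ⟨hx1, hx2⟩, hy1, -⟩ := exists_common_witness hq1 hq1 hx hy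
    exact ⟨n, le_inf hx1 hy1, (mul_le_mul_left inf_le_left _).trans hx2⟩
  · intro x y hx hy
    obtain ⟨n, ⟨hx1, hx2⟩, -, hy2⟩ := exists_common_witness hq1 hq1 hx hy
    refine ⟨n, hx1.trans le_sup_left, ?_⟩
    rw [hA.mul_sup]
    exact sup_le hx2 hy2
  · intro x y hx hy
    obtain ⟨n, ⟨hx1, hx2⟩, hy1, hy2⟩ := exists_common_witness hq1 hq1 hx hy
    refine ⟨n + n, ?_, ?_⟩
    · rw [pow_add]
      exact mul_le_mul' hx1 hy1
    · rw [pow_add, mul_mul_mul_comm]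
      exact mul_le_one' hx2 hy2
  · intro x y hx hy
    obtain ⟨n, ⟨hx1, hx2⟩, hy1, hy2⟩ := exists_common_witness hq1 hq1 hx hy
    refine ⟨n + n, ?_, ?_⟩
    · rw [hA.le_arr_iff (hA.box_pow hq _), pow_add, ← mul_assoc]
      calc x * q ^ n * q ^ n ≤ 1 * q ^ n := mul_le_mul_left hx2 _
        _ = q ^ n := one_mul _
        _ ≤ y := hy1
    · rw [pow_add, ← mul_assoc]
      calc arr x y * q ^ n * q ^ n ≤ arr x y * x * q ^ n :=
            mul_le_mul_left (mul_le_mul_right hx1 _) _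
        _ = x * arr x y * q ^ n := by rw [mul_comm x]
        _ ≤ y * q ^ n := mul_le_mul_left (hA.ax3 x y) _
        _ ≤ 1 := hy2
  · intro x y z hx hy hxz hzy
    obtain ⟨n, ⟨hx1, -⟩, -, hy2⟩ := exists_common_witness hq1 hq1 hx hy
    exact ⟨n, hx1.trans hxz, (mul_le_mul_left hzy _).trans hy2⟩

theorem IsSRL.powerHull_strong {arr : A → A → A} (hA : IsSRL arr) {q : A} (hq : arr 1 q = q)
    (hq1 : q ≤ 1) : IsStronglyConvexSubalgebra arr (powerHull q) := by
  have := hA.isOrderedMonoid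
  refine ⟨hA.powerHull_convex hq hq1, ?_⟩
  rintro x h ⟨n, hn, -⟩ hxh hhx
  have hle : h ≤ x := by
    simpa using (hA.le_arr_iff hA.box_one h x).mp hhx
  exact ⟨n, hn.trans hle, (mul_le_mul_right hn x).trans hxh⟩

/-- If `a ≤ 1`, then `C[a] ⊆ powerHull (□a)`. -/
theorem IsSRL.mem_powerHull_of_forall {arr : A → A → A} (hA : IsSRL arr) {a x : A} (ha : a ≤ 1)
    (hx : ∀ H : Set A, IsStronglyConvexSubalgebra arr H → a ∈ H → x ∈ H) :
    x ∈ powerHull (arr 1 a) := by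
  have := hA.isOrderedMonoid
  have h1 : arr 1 a ≤ 1 := (hA.box_le a).trans ha
  refine hx _ (hA.powerHull_strong (hA.box_arr 1 a) h1) ⟨1, ?_, ?_⟩
  · simpa using hA.box_le a
  · simpa using mul_le_one' ha h1

/-- Every monomial of the expanded left-hand side is divisible by `p ^ m` or by `q ^ n`. -/
theorem sup_pow_le [IsOrderedMonoid A]
    (hsup : ∀ a b c : A, (a ⊔ b) * c = (a * c) ⊔ (b * c)) {p q : A} (hp : p ≤ 1) (hq : q ≤ 1)
    (m n : ℕ) : (p ⊔ q) ^ (m + n) ≤ p ^ m ⊔ q ^ n := by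
  have hpq : p ⊔ q ≤ 1 := sup_le hp hq
  induction m generalizing n with
  | zero => exact (pow_le_one' hpq _).trans (by simp)
  | succ m ihm =>
    induction n with
    | zero => exact (pow_le_one' hpq _).trans (by simp)
    | succ n ihn =>
      rw [show m + 1 + (n + 1) = (m + 1 + n) + 1 by ring, pow_succ', hsup]
      refine sup_le ?_ ?_
      · have h := ihm (n + 1)
        rw [show m + (n + 1) = m + 1 + n by ring] at h
        refine (mul_le_mul_right h p).trans ?_
        rw [mul_comm, hsup, ← pow_succ]
        exact sup_le_sup le_rfl (mul_le_of_le_one_right' hp)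
      · refine (mul_le_mul_right ihn q).trans ?_
        rw [mul_comm, hsup, ← pow_succ]
        exact sup_le_sup (mul_le_of_le_one_right' hq) le_rfl

theorem IsConvexSubalgebra.pow_mem {arr : A → A → A} {H : Set A} (hH : IsConvexSubalgebra arr H)
    {a : A} (ha : a ∈ H) (n : ℕ) : a ^ n ∈ H := by
  induction n with
  | zero => simpa using hH.one_mem
  | succ n ih =>
    rw [pow_succ]
    exact hH.mul_mem _ _ ih ha

/-- in an srl-monoid satisfying E2, for `a, b` in the negative cone,
`C[a ⊔ b] = C[a] ∩ C[b]`. -/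
theorem stmt19 {A : Type*} [Lattice A] [CommMonoid A] (arr : A → A → A)
    (hA : IsSRL arr)
    (hE2 : ∀ x y z : A, arr z (x ⊔ y) = arr z x ⊔ arr z y)
    (a b : A) (ha : a ≤ 1) (hb : b ≤ 1) :
    ∀ x : A,
      (∀ H : Set A, IsStronglyConvexSubalgebra arr H → a ⊔ b ∈ H → x ∈ H) ↔
      ((∀ H : Set A, IsStronglyConvexSubalgebra arr H → a ∈ H → x ∈ H) ∧
       (∀ H : Set A, IsStronglyConvexSubalgebra arr H → b ∈ H → x ∈ H)) := by
  intro x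
  constructor
  · intro hx
    refine ⟨fun H hH haH => hx H hH ?_, fun H hH hbH => hx H hH ?_⟩
    · exact hH.toConvex.convex a 1 _ haH hH.toConvex.one_mem le_sup_left (sup_le ha hb)
    · exact hH.toConvex.convex b 1 _ hbH hH.toConvex.one_mem le_sup_right (sup_le ha hb)
  · rintro ⟨hxa, hxb⟩ H hH habH
    have := hA.isOrderedMonoid
    have hp : arr 1 a ≤ 1 := (hA.box_le a).trans ha
    have hq : arr 1 b ≤ 1 := (hA.box_le b).trans hb
    obtain ⟨n, ⟨ha1, ha2⟩, hb1, hb2⟩ := exists_common_witness hp hq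
      (hA.mem_powerHull_of_forall ha hxa) (hA.mem_powerHull_of_forall hb hxb)
    have hpow := sup_pow_le hA.mul_sup hp hq n n
    have hmem : (arr 1 a ⊔ arr 1 b) ^ (n + n) ∈ H := by
      rw [← hE2]
      exact hH.toConvex.pow_mem (hH.toConvex.arr_mem _ _ hH.toConvex.one_mem habH) _
    refine hH.strong x _ hmem ?_ (hA.one_le_arr (hpow.trans (sup_le ha1 hb1)))
    refine (mul_le_mul_right hpow x).trans ?_
    rw [mul_comm, hA.mul_sup, mul_comm _ x, mul_comm _ x]
    exact sup_le ha2 hb2
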